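/- Let d ≥ 2, let s be a positive integer, β > −d−s, and λ_0, …, λ_{s−1} > 0. Let Y, Y' be solid harmonics of degrees m, m' on ℝ^d, let n ≥ m and n' ≥ m', and set S = S_{m,Y}^{n,(β,−s)} and S' = S_{m',Y'}^{n',(β,−s)}. Then: (i) if n ≠ n', or if ∫_{S^{d−1}} Y Y' dσ = 0, then ⟨S, S'⟩_{β,−s} = 0; (ii) if (n,m,Y) = (n',m',Y') and (1/ω_d) ∫_{S^{d−1}} Y(ξ)² dσ(ξ) = 1, then ⟨S, S⟩_{β,−s} = 2^{2(n−m)} λ_{n−m} when 0 ≤ n−m ≤ s−1, and ⟨S, S⟩_{β,−s} = 2^{s−β−2m−d} ĥ_{n−m−s}^{(s+2m+β+d−1,0)} when n−m ≥ s. -/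

import Mathlib

open MeasureTheory Finset

noncomputable section

/-- Pochhammer symbol `(x)_k`. -/
def poch (x : ℝ) (k : ℕ) : ℝ := (ascPochhammer ℝ k).eval x

/-- Jacobi polynomial `P_n^{(a,b)}` for real parameters. -/
def jacobiP (a b : ℝ) (n : ℕ) (t : ℝ) : ℝ :=
  (poch (a + 1) n / (n.factorial : ℝ)) *
    ∑ k ∈ Finset.range (n + 1),
      poch (-(n : ℝ)) k * poch ((n : ℝ) + a + b + 1) k /
        ((k.factorial : ℝ) * poch (a + 1) k) * ((1 - t) / 2) ^ k

/-- Normalizing constant `A_n^{(a,b)}`. -/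
def jacobiA (a b : ℝ) (n : ℕ) : ℝ := 2 ^ n / poch ((n : ℝ) + a + b + 1) n

/-- Normalized Jacobi polynomial `P̂_n^{(a,b)}`. -/
def jacobiPhat (a b : ℝ) (n : ℕ) (t : ℝ) : ℝ := jacobiA a b n * jacobiP a b n t

/-- The polynomials `J_n^{(a-s,b-s)}` (defined from the parameters `a, b > -1`). -/
def jacobiJ (a b : ℝ) (s n : ℕ) (t : ℝ) : ℝ :=
  if n < s then (1 + t) ^ n / (n.factorial : ℝ)
  else ∫ u in (-1 : ℝ)..t, (t - u) ^ (s - 1) / ((s - 1).factorial : ℝ) * jacobiPhat a b (n - s) u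

/-- Normalization constant `c_{a,b}`. -/
def cconst (a b : ℝ) : ℝ := Real.Gamma (a + b + 2) / (Real.Gamma (a + 1) * Real.Gamma (b + 1))

/-- Norm square `h_n^{(a,b)}`. -/
def hJac (a b : ℝ) (n : ℕ) : ℝ :=
  poch (a + 1) n * poch (b + 1) n * (a + b + n + 1) /
    ((n.factorial : ℝ) * poch (a + b + 2) n * (a + b + 2 * n + 1))

/-- Norm square `ĥ_n^{(a,b)}`. -/
def hHat (a b : ℝ) (n : ℕ) : ℝ := 2 ^ (a + b + 1) / cconst a b * (jacobiA a b n) ^ 2 * hJac a b n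

/-- The polynomials `J_n^{(a,-s)}`, built from `P̂^{(a+s,0)}`. -/
def jacobiJneg (a : ℝ) (s n : ℕ) (t : ℝ) : ℝ := jacobiJ (a + s) 0 s n t

/-- Euclidean space `ℝ^d`. -/
abbrev Euc (d : ℕ) : Type := EuclideanSpace ℝ (Fin d)

/-- The surface measure on the unit sphere `S^{d-1} ⊂ ℝ^d`. -/
def sphMeasure (d : ℕ) : Measure (Metric.sphere (0 : Euc d) 1) :=
  (volume : Measure (Euc d)).toSphere

/-- Surface area `ω_d` of the unit sphere. -/
def omegaS (d : ℕ) : ℝ := (sphMeasure d Set.univ).toReal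

/-- Integral over the sphere of a function defined on `ℝ^d`. -/
def sphInt (d : ℕ) (g : Euc d → ℝ) : ℝ := ∫ ξ, g (ξ : Euc d) ∂(sphMeasure d)

/-- The conic surface `V_0^{d+1} = {(x,t) : ‖x‖ = t, 0 ≤ t ≤ 1}` as a subset of `ℝ^d × ℝ`. -/
def coneSet (d : ℕ) : Set (Euc d × ℝ) := {p | ‖p.1‖ = p.2 ∧ 0 ≤ p.2 ∧ p.2 ≤ 1}

/-- The integral `∫_{V_0^{d+1}} f dm`. -/
def coneInt (d : ℕ) (f : Euc d × ℝ → ℝ) : ℝ :=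
  ∫ t in (0 : ℝ)..1, t ^ (d - 1) * sphInt d (fun ξ => f (t • ξ, t))

/-- `∂_t^k f`: the `k`-th partial derivative in the last variable `t`, with `x` fixed. -/
def pdT (k : ℕ) (f : Euc d × ℝ → ℝ) : Euc d × ℝ → ℝ :=
  fun p => iteratedDeriv k (fun τ => f (p.1, τ)) p.2

/-- A solid harmonic of degree `m` on `ℝ^d`: a homogeneous polynomial annihilated by the
Laplacian. -/
def IsSolidHarmonic (d m : ℕ) (Y : Euc d → ℝ) : Prop :=
  ∃ q : MvPolynomial (Fin d) ℝ, q.IsHomogeneous m ∧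
    (∑ i : Fin d, MvPolynomial.pderiv i (MvPolynomial.pderiv i q)) = 0 ∧
    ∀ x : Euc d, Y x = MvPolynomial.eval (fun i => x i) q

/-- The ordinary inner product `⟨f,g⟩_{β,γ}` on the conic surface. -/
def coneInner (d : ℕ) (β γ : ℝ) (f g : Euc d × ℝ → ℝ) : ℝ :=
  cconst (β + d - 1) γ / omegaS d *
    coneInt d (fun p => f p * g p * p.2 ^ β * (1 - p.2) ^ γ)

/-- The (classical) Jacobi basis polynomial `S_{m,Y}^{n,(β,γ)}` on the cone. -/
def coneS (d : ℕ) (β γ : ℝ) (n m : ℕ) (Y : Euc d → ℝ) : Euc d × ℝ → ℝ :=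
  fun p => jacobiP (2 * m + β + d - 1) γ (n - m) (1 - 2 * p.2) * Y p.1

/-- The norm square `h_{n,m}^{β,γ}`. -/
def coneH (d : ℕ) (β γ : ℝ) (n m : ℕ) : ℝ :=
  poch (β + d) (2 * m) / poch (β + γ + d + 1) (2 * m) * hJac (2 * m + β + d - 1) γ (n - m)

/-- The orthogonal projection `proj_n^{β,γ} f` built from an orthonormal spanning family of
solid harmonics. -/
def coneProj (d : ℕ) (N : ℕ → ℕ) (Y : (m : ℕ) → Fin (N m) → Euc d → ℝ) (β γ : ℝ) (n : ℕ)
    (f : Euc d × ℝ → ℝ) : Euc d × ℝ → ℝ :=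
  fun p => ∑ m ∈ Finset.range (n + 1), ∑ ℓ : Fin (N m),
    coneInner d β γ f (coneS d β γ n m (Y m ℓ)) / coneH d β γ n m * coneS d β γ n m (Y m ℓ) p

/-- The Sobolev inner product `⟨f,g⟩_{β,-s}` on the conic surface. -/
def coneSobInner (d : ℕ) (β : ℝ) (s : ℕ) (lam : ℕ → ℝ) (f g : Euc d × ℝ → ℝ) : ℝ :=
  (1 / omegaS d) * coneInt d (fun p => pdT s f p * pdT s g p * p.2 ^ (β + s)) +
    ∑ k ∈ Finset.range s, lam k / omegaS d *
      sphInt d (fun ξ => pdT k f (ξ, 1) * pdT k g (ξ, 1))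

/-- The Sobolev basis polynomial `S_{m,Y}^{n,(β,-s)}` on the cone. -/
def coneSS (d : ℕ) (β : ℝ) (s n m : ℕ) (Y : Euc d → ℝ) : Euc d × ℝ → ℝ :=
  fun p => jacobiJneg (2 * m + β + d - 1) s (n - m) (1 - 2 * p.2) * Y p.1

/-- The Sobolev norm square `h_{m,n}^{(β,-s)}`. -/
def coneSobH (d : ℕ) (β : ℝ) (s : ℕ) (lam : ℕ → ℝ) (n m : ℕ) : ℝ :=
  if n - m < s then 2 ^ (2 * (n - m)) * lam (n - m)
  else 2 ^ ((s : ℝ) - β - 2 * m - d) * hHat ((s : ℝ) + 2 * m + β + d - 1) 0 (n - m - s)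

/-- The Sobolev orthogonal projection `proj_n^{β,-s} f`. -/
def coneSobProj (d : ℕ) (N : ℕ → ℕ) (Y : (m : ℕ) → Fin (N m) → Euc d → ℝ) (β : ℝ) (s : ℕ)
    (lam : ℕ → ℝ) (n : ℕ) (f : Euc d × ℝ → ℝ) : Euc d × ℝ → ℝ :=
  fun p => ∑ m ∈ Finset.range (n + 1), ∑ ℓ : Fin (N m),
    coneSobInner d β s lam f (coneSS d β s n m (Y m ℓ)) / coneSobH d β s lam n m *
      coneSS d β s n m (Y m ℓ) p

/-- The spherical harmonic projection `Proj_k[g]` built from the orthonormal spanning family. -/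
def sphProj (d : ℕ) (N : ℕ → ℕ) (Y : (m : ℕ) → Fin (N m) → Euc d → ℝ) (k : ℕ)
    (g : Euc d → ℝ) : Euc d → ℝ :=
  fun x => ∑ ℓ : Fin (N k), (1 / omegaS d) * sphInt d (fun ξ => g ξ * Y k ℓ ξ) * Y k ℓ x

/-- Hypotheses: `(Y_ℓ^m)` is an orthonormal spanning family of solid harmonics. -/
def IsONBasisFamily (d : ℕ) (N : ℕ → ℕ) (Y : (m : ℕ) → Fin (N m) → Euc d → ℝ) : Prop :=
  (∀ m ℓ, IsSolidHarmonic d m (Y m ℓ)) ∧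
  (∀ m (ℓ ℓ' : Fin (N m)),
    (1 / omegaS d) * sphInt d (fun ξ => Y m ℓ ξ * Y m ℓ' ξ) = if ℓ = ℓ' then 1 else 0) ∧
  (∀ m (Z : Euc d → ℝ), IsSolidHarmonic d m Z →
    ∃ c : Fin (N m) → ℝ, ∀ x, Z x = ∑ ℓ : Fin (N m), c ℓ * Y m ℓ x)

/-!
In the cone basis `∂_t` only acts on the radial factor, so the Sobolev product of `F(t) Y(x)` and
`G(t) Y'(x)` is the spherical pairing of `Y` and `Y'` times a univariate Sobolev product of `F` and
`G`, with weight `t ^ (β + s + d - 1 + m + m')`.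

Spherical pairings of solid harmonics of different degrees vanish. In polar coordinates they are
proportional to Gaussian pairings, and Euler's identity together with Gaussian integration by parts
gives `m 𝔼[q q'] = ∑ᵢ 𝔼[∂ᵢq ∂ᵢq']` for `q` harmonic of degree `m`. The right-hand side is symmetric
in `q` and `q'`, so `(m - m') 𝔼[q q'] = 0`.

The polynomial `J_n^{(a,-s)}` with `n ≥ s` is the `s`-fold primitive of `P̂_{n-s}^{(a+s,0)}` based
at `-1`, that is, at `t = 1`. Hence the point evaluations only see the `J_n` with `n < s`, the
integral only those with `n ≥ s`, and the latter are orthogonal because the `P̂_n^{(a+s,0)}` are.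
For `b = 0` this last fact follows from
`∫₀¹ t ^ x P_N^{(a,0)}(1 - 2t) dt = (a - x)_N / (x + 1)_{N+1}`, a partial fraction decomposition in
`x`, whose right-hand side vanishes at `x = a, …, a + N - 1`.
-/

section Gaussian

open MvPolynomial

lemma eval_smul_of_isHomogeneous {σ R : Type*} [CommSemiring R] {m : ℕ} {q : MvPolynomial σ R}
    (hq : q.IsHomogeneous m) (r : R) (x : σ → R) : eval (r • x) q = r ^ m * eval x q := by
  simp only [eval_eq, mul_sum]
  refine sum_congr rfl fun α hα => ?_
  simp only [Pi.smul_apply, smul_eq_mul, mul_pow, prod_mul_distrib, prod_pow_eq_pow_sum,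
    ← hq.degree_eq_sum_deg_support hα]
  ring

lemma hasLineDerivAt_mvPolynomial_eval {ι 𝕜 : Type*} [DecidableEq ι]
    [NontriviallyNormedField 𝕜] (p : MvPolynomial ι 𝕜) (i : ι)
    (x : ι → 𝕜) :
    HasLineDerivAt 𝕜 (fun y => eval y p) (eval x (pderiv i p)) x (Pi.single i 1) := by
  induction p using MvPolynomial.induction_on with
  | C a => simpa [HasLineDerivAt] using hasDerivAt_const (0 : 𝕜) a
  | add p q hp hq =>
    simp only [HasLineDerivAt, map_add] at hp hq ⊢
    exact hp.add hq
  | mul_X p j hp =>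
    have hX : HasDerivAt (fun t : 𝕜 => (x + t • Pi.single i 1 : ι → 𝕜) j)
        ((Pi.single i 1 : ι → 𝕜) j) 0 := by
      simpa using ((hasDerivAt_id (0 : 𝕜)).mul_const ((Pi.single i 1 : ι → 𝕜) j)).const_add (x j)
    simp only [HasLineDerivAt, map_mul, eval_X] at hp ⊢
    refine (hp.mul hX).congr_deriv ?_
    by_cases hij : j = i
    · subst hij; simp [Derivation.leibniz, mul_comm, add_comm]
    · simp [Derivation.leibniz, hij, mul_comm]

variable {ι : Type*} [Fintype ι]

lemma hasLineDerivAt_exp_neg_norm_sq_div_two [DecidableEq ι] (i : ι) (x : EuclideanSpace ℝ ι) :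
    HasLineDerivAt ℝ (fun y : EuclideanSpace ℝ ι => Real.exp (-‖y‖ ^ 2 / 2))
      (-x i * Real.exp (-‖x‖ ^ 2 / 2)) x (EuclideanSpace.single i 1) := by
  have hsq : HasLineDerivAt ℝ (fun y : EuclideanSpace ℝ ι => ‖y‖ ^ 2) (2 * x i) x
      (EuclideanSpace.single i 1) := by
    simpa [EuclideanSpace.inner_single_right] using
      (hasStrictFDerivAt_norm_sq x).hasFDerivAt.hasLineDerivAt (EuclideanSpace.single i (1 : ℝ))
  have hexp := (HasDerivAt.fun_neg hsq).div_const 2 |>.exp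
  refine hexp.congr_deriv ?_
  simp only [zero_smul, add_zero]
  ring

lemma integrableOn_pow_mul_exp_neg_sq_div_two (k : ℕ) :
    IntegrableOn (fun r : ℝ => r ^ k * Real.exp (-r ^ 2 / 2)) (Set.Ioi 0) := by
  have hk : (-1 : ℝ) < k := by linarith [k.cast_nonneg (α := ℝ)]
  have h := integrable_rpow_mul_exp_neg_mul_sq (b := 1 / 2) one_half_pos hk
  simpa [Real.rpow_natCast, neg_div, div_eq_inv_mul] using h.integrableOn

lemma integrable_mvPolynomial_eval_mul_exp_neg_norm_sq [Nonempty ι] (p : MvPolynomial ι ℝ) :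
    Integrable fun x : EuclideanSpace ℝ ι => eval x.ofLp p * Real.exp (-‖x‖ ^ 2 / 2) := by
  induction p using MvPolynomial.induction_on' with
  | add p q hp hq =>
    simp only [map_add, add_mul]
    exact hp.add hq
  | monomial α c =>
    have hnorm : Integrable fun x : EuclideanSpace ℝ ι =>
        ‖x‖ ^ (∑ i, α i) * Real.exp (-‖x‖ ^ 2 / 2) := by
      refine (integrable_fun_norm_addHaar volume
        (f := fun r : ℝ => r ^ (∑ i, α i) * Real.exp (-r ^ 2 / 2))).2 ?_
      simpa only [smul_eq_mul, ← mul_assoc, ← pow_add] using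
        integrableOn_pow_mul_exp_neg_sq_div_two _
    have hcont : Continuous fun x : EuclideanSpace ℝ ι =>
        eval x.ofLp (monomial α c) * Real.exp (-‖x‖ ^ 2 / 2) :=
      ((continuous_eval _).comp (PiLp.continuous_ofLp 2 _)).mul (by fun_prop)
    refine (hnorm.const_mul |c|).mono' hcont.aestronglyMeasurable (.of_forall fun x => ?_)
    rw [eval_monomial, Finsupp.prod_fintype _ _ fun _ => pow_zero _, norm_mul,
      norm_mul, norm_prod, Real.norm_eq_abs c, Real.norm_of_nonneg (Real.exp_pos _).le, mul_assoc,
      ← prod_pow_eq_pow_sum]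
    gcongr with i
    rw [norm_pow]
    gcongr
    exact PiLp.norm_apply_le x i

variable [Nonempty ι]

/-- The integral of a polynomial on `ℝ^ι` against the unnormalized standard Gaussian weight
`exp (-‖x‖² / 2)`, as a linear functional. -/
def gaussianIntegral : MvPolynomial ι ℝ →ₗ[ℝ] ℝ where
  toFun p := ∫ x : EuclideanSpace ℝ ι, eval x.ofLp p * Real.exp (-‖x‖ ^ 2 / 2)
  map_add' p q := by
    simp only [map_add, add_mul]
    exact integral_add (integrable_mvPolynomial_eval_mul_exp_neg_norm_sq p)
      (integrable_mvPolynomial_eval_mul_exp_neg_norm_sq q)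
  map_smul' c p := by
    simp only [smul_eval, mul_assoc, integral_const_mul, smul_eq_mul, RingHom.id_apply]

lemma gaussianIntegral_apply (p : MvPolynomial ι ℝ) :
    gaussianIntegral p = ∫ x : EuclideanSpace ℝ ι, eval x.ofLp p * Real.exp (-‖x‖ ^ 2 / 2) := rfl

lemma gaussianIntegral_X_mul (i : ι) (p : MvPolynomial ι ℝ) :
    gaussianIntegral (X i * p) = gaussianIntegral (pderiv i p) := by
  classical
  have h := integral_bilinear_hasLineDerivAt_right_eq_neg_left_of_integrable
    (μ := (volume : Measure (EuclideanSpace ℝ ι))) (B := ContinuousLinearMap.mul ℝ ℝ)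
    (f := fun x => eval x.ofLp p) (g := fun x => Real.exp (-‖x‖ ^ 2 / 2))
    (v := EuclideanSpace.single i 1)
    (integrable_mvPolynomial_eval_mul_exp_neg_norm_sq (pderiv i p))
    ((integrable_mvPolynomial_eval_mul_exp_neg_norm_sq (-(X i * p))).congr
      (.of_forall fun x => by
        simp only [map_neg, map_mul, eval_X, ContinuousLinearMap.mul_apply']
        ring))
    (integrable_mvPolynomial_eval_mul_exp_neg_norm_sq p)
    (fun x _ => hasLineDerivAt_mvPolynomial_eval p i x.ofLp)
    (fun x _ => hasLineDerivAt_exp_neg_norm_sq_div_two i x)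
  simp only [ContinuousLinearMap.mul_apply'] at h
  rw [gaussianIntegral_apply, gaussianIntegral_apply, ← neg_inj, ← h, ← integral_neg]
  refine integral_congr_ae (.of_forall fun x => ?_)
  simp only [map_mul, eval_X]
  ring

lemma natCast_mul_gaussianIntegral_mul {m : ℕ} {q : MvPolynomial ι ℝ} (hq : q.IsHomogeneous m)
    (hΔ : ∑ i, pderiv i (pderiv i q) = 0) (r : MvPolynomial ι ℝ) :
    m * gaussianIntegral (q * r) = ∑ i, gaussianIntegral (pderiv i q * pderiv i r) := by
  calc (m : ℝ) * gaussianIntegral (q * r)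
      = ∑ i, gaussianIntegral (X i * (pderiv i q * r)) := by
        rw [← nsmul_eq_mul, ← map_nsmul, ← smul_mul_assoc, ← hq.sum_X_mul_pderiv, sum_mul, map_sum]
        simp only [mul_assoc]
    _ = gaussianIntegral ((∑ i, pderiv i (pderiv i q)) * r) +
          ∑ i, gaussianIntegral (pderiv i q * pderiv i r) := by
        simp only [gaussianIntegral_X_mul, pderiv_mul, map_add, sum_add_distrib, sum_mul, map_sum]
    _ = _ := by rw [hΔ, zero_mul, map_zero, zero_add]

lemma gaussianIntegral_mul_eq_zero {m m' : ℕ} (hne : m ≠ m') {q q' : MvPolynomial ι ℝ}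
    (hq : q.IsHomogeneous m) (hΔ : ∑ i, pderiv i (pderiv i q) = 0)
    (hq' : q'.IsHomogeneous m') (hΔ' : ∑ i, pderiv i (pderiv i q') = 0) :
    gaussianIntegral (q * q') = 0 := by
  have h := natCast_mul_gaussianIntegral_mul hq hΔ q'
  have h' := natCast_mul_gaussianIntegral_mul hq' hΔ' q
  simp only [mul_comm q', mul_comm (pderiv _ q')] at h'
  exact (mul_eq_mul_right_iff.1 (h.trans h'.symm)).resolve_left (Nat.cast_injective.ne hne)

end Gaussian

section Polar

open Module

variable {E : Type*} [NormedAddCommGroup E] [NormedSpace ℝ E] [FiniteDimensional ℝ E]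
  [Nontrivial E] [MeasurableSpace E] [BorelSpace E]

lemma integral_homogeneous_mul_fun_norm_addHaar (μ : Measure E) [μ.IsAddHaarMeasure] {k : ℕ}
    {f : E → ℝ} (hf : ∀ r > 0, ∀ x, f (r • x) = r ^ k * f x) (g : ℝ → ℝ) :
    ∫ x, f x * g ‖x‖ ∂μ =
      (∫ ξ : Metric.sphere (0 : E) 1, f ξ ∂μ.toSphere) *
        ∫ r in Set.Ioi (0 : ℝ), r ^ (finrank ℝ E - 1 + k) * g r :=
  calc
    ∫ x, f x * g ‖x‖ ∂μ = ∫ x : ({0}ᶜ : Set E), f x * g ‖(x : E)‖ ∂μ.comap (↑) := by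
      rw [integral_subtype_comap (measurableSet_singleton _).compl fun x ↦ f x * g ‖x‖,
        restrict_compl_singleton]
    _ = ∫ p, f p.1 * (p.2 ^ k * g p.2) ∂μ.toSphere.prod (.volumeIoiPow (finrank ℝ E - 1)) := by
      rw [← μ.measurePreserving_homeomorphUnitSphereProd.integral_comp
        (Homeomorph.measurableEmbedding _)]
      refine integral_congr_ae (.of_forall fun x => ?_)
      have hx : 0 < ‖(x : E)‖ := norm_pos_iff.2 x.2
      have hfx := hf ‖(x : E)‖ hx (‖(x : E)‖⁻¹ • x)
      rw [smul_inv_smul₀ hx.ne'] at hfx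
      simp only [homeomorphUnitSphereProd_apply_fst_coe, homeomorphUnitSphereProd_apply_snd_coe]
      rw [hfx]
      ring
    _ = (∫ ξ, f ξ ∂μ.toSphere) *
          ∫ r : Set.Ioi (0 : ℝ), r ^ k * g r ∂.volumeIoiPow (finrank ℝ E - 1) :=
      integral_prod_mul (fun ξ : Metric.sphere (0 : E) 1 => f ξ)
        fun r : Set.Ioi (0 : ℝ) => (r : ℝ) ^ k * g r
    _ = _ := by
      simp only [Measure.volumeIoiPow, ENNReal.ofReal]
      rw [integral_withDensity_eq_integral_smul
          (measurable_subtype_coe.pow_const _).real_toNNReal,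
        integral_subtype_comap measurableSet_Ioi
          fun r => Real.toNNReal (r ^ (finrank ℝ E - 1)) • (r ^ k * g r),
        setIntegral_congr_fun measurableSet_Ioi fun r hr => ?_]
      rw [NNReal.smul_def, Real.coe_toNNReal _ (pow_nonneg hr.out.le _), smul_eq_mul, pow_add,
        mul_assoc]

end Polar

lemma integral_pow_mul_exp_neg_sq_div_two_pos (k : ℕ) :
    0 < ∫ r in Set.Ioi (0 : ℝ), r ^ k * Real.exp (-r ^ 2 / 2) := by
  have hk : (-1 : ℝ) < k := by linarith [k.cast_nonneg (α := ℝ)]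
  have h := integral_rpow_mul_exp_neg_mul_rpow two_pos hk one_half_pos
  simp only [Real.rpow_natCast, Real.rpow_two] at h
  have hexp (r : ℝ) : -r ^ 2 / 2 = -(1 / 2) * r ^ 2 := by ring
  simp only [hexp, h]
  have := Real.Gamma_pos_of_pos (s := ((k : ℝ) + 1) / 2) (by positivity)
  positivity

section SolidHarmonic

variable {d m m' : ℕ} {Y Y' : Euc d → ℝ}

lemma IsSolidHarmonic.map_smul (hY : IsSolidHarmonic d m Y) (r : ℝ) (x : Euc d) :
    Y (r • x) = r ^ m * Y x := by
  obtain ⟨q, hq, -, hYq⟩ := hY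
  rw [hYq, hYq]
  exact eval_smul_of_isHomogeneous hq r x.ofLp

lemma IsSolidHarmonic.sphInt_mul_eq_zero (hY : IsSolidHarmonic d m Y)
    (hY' : IsSolidHarmonic d m' Y') (hd : d ≠ 0) (hne : m ≠ m') :
    sphInt d (fun ξ => Y ξ * Y' ξ) = 0 := by
  have : NeZero d := ⟨hd⟩
  have hpolar := integral_homogeneous_mul_fun_norm_addHaar (volume : Measure (Euc d))
    (k := m + m') (f := fun x => Y x * Y' x)
    (fun r _ x => by rw [hY.map_smul, hY'.map_smul, pow_add]; ring) fun r => Real.exp (-r ^ 2 / 2)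
  obtain ⟨q, hq, hΔ, hYq⟩ := hY
  obtain ⟨q', hq', hΔ', hYq'⟩ := hY'
  have hgauss := gaussianIntegral_mul_eq_zero hne hq hΔ hq' hΔ'
  simp only [gaussianIntegral_apply, map_mul, ← hYq, ← hYq'] at hgauss
  rw [hgauss] at hpolar
  exact (mul_eq_zero.1 hpolar.symm).resolve_right (integral_pow_mul_exp_neg_sq_div_two_pos _).ne'

end SolidHarmonic

section PartialFractions

open Polynomial

lemma ascPochhammer_eval_eq_prod_range {R : Type*} [CommSemiring R] (x : R) (n : ℕ) :
    (ascPochhammer R n).eval x = ∏ j ∈ range n, (x + j) := by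
  induction n with
  | zero => simp
  | succ n ih => rw [ascPochhammer_succ_eval, ih, prod_range_succ]

lemma prod_erase_range_sub_natCast {R : Type*} [CommRing R] {N k : ℕ} (hk : k ≤ N) :
    ∏ j ∈ (range (N + 1)).erase k, ((j : R) - k) =
      (-1) ^ k * k.factorial * (N - k).factorial := by
  induction N, hk using Nat.le_induction with
  | base =>
    rw [range_add_one, erase_insert notMem_range_self, Nat.sub_self, Nat.factorial_zero,
      Nat.cast_one, mul_one, ← Nat.descFactorial_self, ← descPochhammer_eval_eq_descFactorial R,
      descPochhammer_eval_eq_prod_range]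
    simpa only [neg_sub, card_range] using prod_neg (s := range k) fun j : ℕ => (k : R) - j
  | succ N hkN ih =>
    rw [range_add_one, erase_insert_of_ne (by omega), prod_insert (by simp), ih,
      Nat.succ_sub hkN, Nat.factorial_succ]
    push_cast [Nat.cast_sub hkN]
    ring

variable {K : Type*} [Field K]

lemma nodalWeight_range_neg_natCast {N k : ℕ} (hk : k ≤ N) :
    Lagrange.nodalWeight (range (N + 1)) (fun j : ℕ => -(j : K)) k =
      (-1) ^ k / (k.factorial * (N - k).factorial) := by
  simp only [Lagrange.nodalWeight, sub_neg_eq_add, neg_add_eq_sub]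
  rw [prod_inv_distrib, prod_erase_range_sub_natCast hk, mul_assoc, mul_inv, ← inv_pow,
    inv_neg_one, div_eq_mul_inv]

-- Barycentric Lagrange interpolation of `Q` at the nodes `0, -1, …, -N`, divided by the nodal
-- polynomial `x (x + 1) ⋯ (x + N)`.
lemma sum_choose_mul_eval_neg_div_add [CharZero K] {Q : K[X]} {N : ℕ} (hQ : Q.natDegree ≤ N) {x : K}
    (hx : ∀ k ≤ N, x + k ≠ 0) :
    ∑ k ∈ range (N + 1), (-1) ^ k * N.choose k * Q.eval (-(k : K)) / (x + k) =
      N.factorial * Q.eval x / (ascPochhammer K (N + 1)).eval x := by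
  have hnodal : (Lagrange.nodal (range (N + 1)) fun k : ℕ => -(k : K)).eval x =
      (ascPochhammer K (N + 1)).eval x := by
    simp only [Lagrange.eval_nodal, sub_neg_eq_add, ascPochhammer_eval_eq_prod_range]
  have hne : (ascPochhammer K (N + 1)).eval x ≠ 0 := by
    rw [ascPochhammer_eval_eq_prod_range]
    exact prod_ne_zero_iff.2 fun k hk => hx k (mem_range_succ_iff.1 hk)
  have hQx : Q.eval x = (ascPochhammer K (N + 1)).eval x *
      ∑ k ∈ range (N + 1), Lagrange.nodalWeight (range (N + 1)) (fun k : ℕ => -(k : K)) k *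
        (x - -(k : K))⁻¹ * Q.eval (-(k : K)) := by
    rw [← hnodal, ← Lagrange.eval_interpolate_not_at_node, ← Lagrange.eq_interpolate]
    · exact (neg_injective.comp Nat.cast_injective).injOn
    · rw [card_range]
      exact (degree_le_of_natDegree_le hQ).trans_lt (by exact_mod_cast N.lt_succ_self)
    · exact fun k hk => sub_ne_zero.1 (by simpa using hx k (mem_range_succ_iff.1 hk))
  rw [hQx, mul_left_comm, mul_div_cancel_left₀ _ hne, mul_sum]
  refine sum_congr rfl fun k hk => ?_
  have hkN := mem_range_succ_iff.1 hk
  rw [nodalWeight_range_neg_natCast hkN, Nat.cast_choose K hkN, sub_neg_eq_add]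
  ring

end PartialFractions

section Jacobi

lemma poch_add (x : ℝ) (i j : ℕ) : poch x (i + j) = poch x i * poch (x + i) j := by
  simp [poch, ← ascPochhammer_mul]

lemma poch_one_right (x : ℝ) : poch x 1 = x := by simp [poch]

lemma poch_pos {x : ℝ} (hx : 0 < x) (k : ℕ) : 0 < poch x k := ascPochhammer_pos k x hx

lemma poch_neg_natCast (N k : ℕ) : poch (-N) k = (-1) ^ k * (k.factorial * N.choose k) := by
  rw [poch, ascPochhammer_eval_neg_eq_descPochhammer, descPochhammer_eval_eq_descFactorial,
    Nat.descFactorial_eq_factorial_mul_choose, Nat.cast_mul]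

/-- The coefficient of `t ^ k` in `P_N^{(a,0)}(1 - 2t)`. -/
def jacobiCoeff (a : ℝ) (N k : ℕ) : ℝ :=
  (-1) ^ k * N.choose k * poch (a + 1 + k) N / N.factorial

variable {a x : ℝ}

lemma jacobiP_zero_right_one_sub_two_mul (ha : -1 < a) (N : ℕ) (t : ℝ) :
    jacobiP a 0 N (1 - 2 * t) = ∑ k ∈ range (N + 1), jacobiCoeff a N k * t ^ k := by
  rw [jacobiP, mul_sum]
  refine sum_congr rfl fun k _ => ?_
  have hpos := poch_pos (neg_lt_iff_pos_add.1 ha) k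
  have hswap : poch (a + 1) N * poch (N + a + 0 + 1) k = poch (a + 1) k * poch (a + 1 + k) N := by
    rw [← poch_add, Nat.add_comm k, poch_add]
    ring_nf
  rw [poch_neg_natCast, jacobiCoeff, show (1 - (1 - 2 * t)) / 2 = t by ring]
  field_simp
  linear_combination (N.choose k : ℝ) * t ^ k * hswap

lemma integral_rpow_mul_sum_mul_pow (hx : -1 < x) (n : ℕ) (c : ℕ → ℝ) :
    ∫ t in (0 : ℝ)..1, t ^ x * ∑ k ∈ range n, c k * t ^ k = ∑ k ∈ range n, c k / (x + 1 + k) := by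
  have hxk (k : ℕ) : -1 < x + k := by linarith [k.cast_nonneg (α := ℝ)]
  calc ∫ t in (0 : ℝ)..1, t ^ x * ∑ k ∈ range n, c k * t ^ k
      = ∫ t in (0 : ℝ)..1, ∑ k ∈ range n, c k * t ^ (x + k) := by
        refine intervalIntegral.integral_congr_Ioo_of_le zero_le_one fun t ht => ?_
        simp only [mul_sum, Real.rpow_add_natCast ht.1.ne', mul_left_comm]
    _ = ∑ k ∈ range n, c k / (x + 1 + k) := by
        rw [intervalIntegral.integral_finsetSum fun k _ =>
          (intervalIntegral.intervalIntegrable_rpow' (hxk k)).const_mul _]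
        refine sum_congr rfl fun k _ => ?_
        rw [intervalIntegral.integral_const_mul, integral_rpow (.inl (hxk k)), Real.one_rpow,
          Real.zero_rpow (by linarith [hxk k]), sub_zero, mul_one_div, add_right_comm]

lemma integral_rpow_mul_jacobiP (ha : -1 < a) (hx : -1 < x) (N : ℕ) :
    ∫ t in (0 : ℝ)..1, t ^ x * jacobiP a 0 N (1 - 2 * t) =
      poch (a - x) N / poch (x + 1) (N + 1) := by
  set Q : Polynomial ℝ := (ascPochhammer ℝ N).comp (Polynomial.C (a + 1) - Polynomial.X) with hQ
  have hQeval (y : ℝ) : Q.eval y = poch (a + 1 - y) N := by simp [hQ, poch]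
  have hQdeg : Q.natDegree ≤ N := by
    rw [hQ, Polynomial.natDegree_comp, ascPochhammer_natDegree]
    exact mul_le_of_le_one_right' (by compute_degree)
  have hx1 (k : ℕ) (_ : k ≤ N) : x + 1 + k ≠ 0 := by positivity [neg_lt_iff_pos_add.1 hx]
  have hsum := sum_choose_mul_eval_neg_div_add hQdeg hx1
  simp only [hQeval, sub_neg_eq_add, add_sub_add_right_eq_sub] at hsum
  calc ∫ t in (0 : ℝ)..1, t ^ x * jacobiP a 0 N (1 - 2 * t)
      = ∑ k ∈ range (N + 1), jacobiCoeff a N k / (x + 1 + k) := by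
        simp only [jacobiP_zero_right_one_sub_two_mul ha, integral_rpow_mul_sum_mul_pow hx]
    _ = (∑ k ∈ range (N + 1), (-1) ^ k * N.choose k * poch (a + 1 + k) N / (x + 1 + k)) /
          N.factorial := by
        rw [sum_div]
        exact sum_congr rfl fun k _ => div_right_comm _ _ _
    _ = poch (a - x) N / poch (x + 1) (N + 1) := by
        rw [hsum, mul_div_assoc, mul_div_cancel_left₀ _ (by positivity), poch, poch]

lemma continuous_jacobiP (a b : ℝ) (n : ℕ) : Continuous (jacobiP a b n) := by
  unfold jacobiP
  fun_prop

lemma integral_rpow_mul_jacobiP_mul_sum_mul_pow (ha : -1 < a) {N M : ℕ} (hMN : M ≤ N)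
    (c : ℕ → ℝ) :
    ∫ t in (0 : ℝ)..1, t ^ a * (jacobiP a 0 N (1 - 2 * t) * ∑ j ∈ range (M + 1), c j * t ^ j) =
      c M * (poch (-M) N / poch (a + M + 1) (N + 1)) := by
  have haj (j : ℕ) : -1 < a + j := by linarith [j.cast_nonneg (α := ℝ)]
  calc _ = ∫ t in (0 : ℝ)..1, ∑ j ∈ range (M + 1),
          c j * (t ^ (a + j) * jacobiP a 0 N (1 - 2 * t)) := by
        refine intervalIntegral.integral_congr_Ioo_of_le zero_le_one fun t ht => ?_
        simp only [mul_sum, Real.rpow_add_natCast ht.1.ne']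
        exact sum_congr rfl fun j _ => by ring
    _ = ∑ j ∈ range (M + 1), c j * (poch (-j) N / poch (a + j + 1) (N + 1)) := by
        have hcont : Continuous fun t => jacobiP a 0 N (1 - 2 * t) :=
          (continuous_jacobiP a 0 N).comp (by fun_prop)
        rw [intervalIntegral.integral_finsetSum fun j _ =>
          ((intervalIntegral.intervalIntegrable_rpow' (haj j)).mul_continuousOn
            hcont.continuousOn).const_mul _]
        simp only [intervalIntegral.integral_const_mul, integral_rpow_mul_jacobiP ha (haj _),
          sub_add_cancel_left]
    _ = c M * (poch (-M) N / poch (a + M + 1) (N + 1)) := by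
        refine sum_eq_single_of_mem M (self_mem_range_succ M) fun j hj hjM => ?_
        rw [poch, ascPochhammer_eval_neg_coe_nat_of_lt
          ((lt_of_le_of_ne (mem_range_succ_iff.1 hj) hjM).trans_le hMN), zero_div, mul_zero]

lemma integral_rpow_mul_jacobiP_mul_jacobiP_of_le (ha : -1 < a) {N M : ℕ} (hMN : M ≤ N) :
    ∫ t in (0 : ℝ)..1, t ^ a * (jacobiP a 0 N (1 - 2 * t) * jacobiP a 0 M (1 - 2 * t)) =
      if N = M then 1 / (a + 2 * N + 1) else 0 := by
  simp only [jacobiP_zero_right_one_sub_two_mul ha M,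
    integral_rpow_mul_jacobiP_mul_sum_mul_pow ha hMN]
  split_ifs with hNM
  · subst hNM
    have haN : 0 < a + N + 1 := by linarith [N.cast_nonneg (α := ℝ)]
    have hpos := poch_pos haN N
    have hden : 0 < a + N * 2 + 1 := by linarith [N.cast_nonneg (α := ℝ)]
    have hsign : ((-1 : ℝ) ^ N) ^ 2 = 1 := by rw [← pow_mul', pow_mul, neg_one_sq, one_pow]
    rw [jacobiCoeff, poch_neg_natCast, Nat.choose_self, Nat.cast_one, add_right_comm a, poch_add,
      poch_one_right, show a + N + 1 + N = a + 2 * N + 1 by ring]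
    field_simp
    linear_combination hsign
  · rw [poch, ascPochhammer_eval_neg_coe_nat_of_lt (hMN.lt_of_ne' hNM), zero_div, mul_zero]

lemma hHat_zero_right (ha : -1 < a) (N : ℕ) :
    hHat a 0 N = 2 ^ (a + 1) * jacobiA a 0 N ^ 2 / (a + 2 * N + 1) := by
  have ha1 := neg_lt_iff_pos_add.1 ha
  have hsucc : poch (a + 1) N * (a + N + 1) = (a + 1) * poch (a + 2) N := by
    rw [add_right_comm, ← poch_one_right (a + 1 + N), ← poch_add, Nat.add_comm, poch_add,
      poch_one_right, Nat.cast_one, add_assoc, one_add_one_eq_two]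
  have hc : cconst a 0 = a + 1 := by
    rw [cconst, add_zero, zero_add, Real.Gamma_one, mul_one, show a + 2 = a + 1 + 1 by ring,
      Real.Gamma_add_one ha1.ne', mul_div_cancel_right₀ _ (Real.Gamma_pos_of_pos ha1).ne']
  have hden : 0 < a + N * 2 + 1 := by linarith [N.cast_nonneg (α := ℝ)]
  have hpos := poch_pos (show 0 < a + 2 by linarith) N
  have hone : poch 1 N = N.factorial := by simp [poch]
  rw [hHat, hJac, hc]
  simp only [add_zero, zero_add, hone]
  field_simp
  linear_combination jacobiA a 0 N ^ 2 * hsucc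

lemma integral_rpow_mul_jacobiPhat_mul_jacobiPhat (ha : -1 < a) (N M : ℕ) :
    ∫ t in (0 : ℝ)..1, t ^ a * (jacobiPhat a 0 N (1 - 2 * t) * jacobiPhat a 0 M (1 - 2 * t)) =
      if N = M then 2 ^ (-(a + 1)) * hHat a 0 N else 0 := by
  wlog hMN : M ≤ N generalizing N M
  · have hNM := not_le.1 hMN
    have h := this M N hNM.le
    simp only [mul_comm (jacobiPhat a 0 M _)] at h
    rw [h, if_neg hNM.ne', if_neg hNM.ne]
  have hpull (t : ℝ) :
      t ^ a * (jacobiPhat a 0 N (1 - 2 * t) * jacobiPhat a 0 M (1 - 2 * t)) =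
        jacobiA a 0 N * jacobiA a 0 M *
          (t ^ a * (jacobiP a 0 N (1 - 2 * t) * jacobiP a 0 M (1 - 2 * t))) := by
    simp only [jacobiPhat]
    ring
  simp only [hpull, intervalIntegral.integral_const_mul,
    integral_rpow_mul_jacobiP_mul_jacobiP_of_le ha hMN]
  split_ifs with hNM
  · subst hNM
    rw [hHat_zero_right ha, Real.rpow_neg zero_le_two]
    field_simp
  · rw [mul_zero]

end Jacobi

lemma iteratedDeriv_comp_const_sub_mul {𝕜 E : Type*} [NontriviallyNormedField 𝕜]
    [NormedAddCommGroup E] [NormedSpace 𝕜 E] (f : 𝕜 → E) (b c : 𝕜) (k : ℕ) (t : 𝕜) :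
    iteratedDeriv k (fun τ => f (b - c * τ)) t = (-c) ^ k • iteratedDeriv k f (b - c * t) := by
  induction k generalizing t with
  | zero => simp
  | succ k ih =>
    rw [iteratedDeriv_succ, funext ih, iteratedDeriv_succ, deriv_fun_const_smul_field,
      deriv_comp_mul_left c (fun u => iteratedDeriv k f (b - u)), deriv_comp_const_sub, smul_neg,
      ← neg_smul, smul_smul, pow_succ]

section CauchyPrimitive

variable {E : Type*} [NormedAddCommGroup E] [NormedSpace ℝ E]

/-- Cauchy's formula for the `(k + 1)`-fold primitive of `f` based at `c`. -/
def cauchyPrimitive (c : ℝ) (k : ℕ) (f : ℝ → E) (t : ℝ) : E :=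
  ∫ u in c..t, ((t - u) ^ k / (k.factorial : ℝ)) • f u

lemma cauchyPrimitive_self (c : ℝ) (k : ℕ) (f : ℝ → E) : cauchyPrimitive c k f c = 0 :=
  intervalIntegral.integral_same

variable [CompleteSpace E] {f : ℝ → E}

lemma hasDerivAt_cauchyPrimitive_zero (c : ℝ) (hf : Continuous f) (t : ℝ) :
    HasDerivAt (cauchyPrimitive c 0 f) (f t) t := by
  have hzero : cauchyPrimitive c 0 f = fun t => ∫ u in c..t, f u := by
    ext
    simp [cauchyPrimitive]
  rw [hzero]
  exact hf.integral_hasStrictDerivAt c t |>.hasDerivAt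

lemma continuous_cauchyPrimitive_zero (c : ℝ) (hf : Continuous f) :
    Continuous (cauchyPrimitive c 0 f) :=
  continuous_iff_continuousAt.2 fun t => (hasDerivAt_cauchyPrimitive_zero c hf t).continuousAt

lemma hasDerivAt_sub_pow_succ_div_factorial (k : ℕ) (t u : ℝ) :
    HasDerivAt (fun v => (t - v) ^ (k + 1) / ((k + 1).factorial : ℝ))
      (-((t - u) ^ k / (k.factorial : ℝ))) u := by
  refine ((((hasDerivAt_id' u).const_sub t).fun_pow (k + 1)).div_const _).congr_deriv ?_
  rw [Nat.factorial_succ]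
  push_cast
  field_simp

lemma cauchyPrimitive_succ (c : ℝ) (k : ℕ) (hf : Continuous f) :
    cauchyPrimitive c (k + 1) f = cauchyPrimitive c k (cauchyPrimitive c 0 f) := by
  ext t
  have h := intervalIntegral.integral_smul_deriv_eq_deriv_smul (a := c) (b := t)
    (fun u _ => hasDerivAt_sub_pow_succ_div_factorial k t u)
    (fun u _ => hasDerivAt_cauchyPrimitive_zero c hf u)
    (Continuous.intervalIntegrable (by fun_prop) _ _) (hf.intervalIntegrable _ _)
  simp only [sub_self, zero_pow k.succ_ne_zero, zero_div, zero_smul, cauchyPrimitive_self,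
    smul_zero, zero_sub, neg_smul, intervalIntegral.integral_neg, neg_neg] at h
  exact h

lemma iteratedDeriv_succ_cauchyPrimitive (c : ℝ) (k : ℕ) (hf : Continuous f) :
    iteratedDeriv (k + 1) (cauchyPrimitive c k f) = f := by
  induction k generalizing f with
  | zero =>
    rw [zero_add, iteratedDeriv_one]
    exact funext fun t => (hasDerivAt_cauchyPrimitive_zero c hf t).deriv
  | succ k ih =>
    rw [iteratedDeriv_succ, cauchyPrimitive_succ c k hf, ih (continuous_cauchyPrimitive_zero c hf)]
    exact funext fun t => (hasDerivAt_cauchyPrimitive_zero c hf t).deriv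

lemma iteratedDeriv_cauchyPrimitive_self (c : ℝ) {j k : ℕ} (hj : j ≤ k) (hf : Continuous f) :
    iteratedDeriv j (cauchyPrimitive c k f) c = 0 := by
  induction k generalizing f with
  | zero => rw [Nat.le_zero.1 hj, iteratedDeriv_zero, cauchyPrimitive_self]
  | succ k ih =>
    have hF := continuous_cauchyPrimitive_zero c hf
    rw [cauchyPrimitive_succ c k hf]
    obtain hjk | rfl := Nat.le_succ_iff.1 hj
    · exact ih hjk hF
    · rw [iteratedDeriv_succ_cauchyPrimitive c k hF, cauchyPrimitive_self]

end CauchyPrimitive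

section JacobiNegative

lemma iteratedDeriv_one_add_pow_div_factorial (k n : ℕ) (t : ℝ) :
    iteratedDeriv k (fun t : ℝ => (1 + t) ^ n / (n.factorial : ℝ)) t =
      n.descFactorial k * (1 + t) ^ (n - k) / n.factorial := by
  simp only [iteratedDeriv_div_const, iteratedDeriv_comp_const_add k (fun t : ℝ => t ^ n),
    iteratedDeriv_pow]

lemma jacobiJneg_of_lt (a : ℝ) {s n : ℕ} (hn : n < s) :
    jacobiJneg a s n = fun t => (1 + t) ^ n / (n.factorial : ℝ) := by
  ext t
  rw [jacobiJneg, jacobiJ, if_pos hn]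

lemma jacobiJneg_succ_of_lt (a : ℝ) {s n : ℕ} (hn : s < n) :
    jacobiJneg a (s + 1) n =
      cauchyPrimitive (-1) s (jacobiPhat (a + (s + 1 : ℕ)) 0 (n - (s + 1))) := by
  ext t
  simp only [jacobiJneg, jacobiJ, if_neg (Nat.succ_le_iff.2 hn).not_gt, cauchyPrimitive,
    Nat.add_sub_cancel, smul_eq_mul]

lemma continuous_jacobiPhat (a b : ℝ) (n : ℕ) : Continuous (jacobiPhat a b n) :=
  (continuous_jacobiP a b n).const_mul _

lemma iteratedDeriv_jacobiJneg (a : ℝ) {s : ℕ} (hs : s ≠ 0) (n : ℕ) :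
    iteratedDeriv s (jacobiJneg a s n) = if n < s then 0 else jacobiPhat (a + s) 0 (n - s) := by
  obtain ⟨s, rfl⟩ := Nat.exists_eq_succ_of_ne_zero hs
  split_ifs with hn
  · ext t
    rw [jacobiJneg_of_lt a hn, iteratedDeriv_one_add_pow_div_factorial,
      Nat.descFactorial_of_lt hn]
    simp
  · rw [jacobiJneg_succ_of_lt a (by omega)]
    exact iteratedDeriv_succ_cauchyPrimitive _ _ (continuous_jacobiPhat _ _ _)

lemma iteratedDeriv_jacobiJneg_neg_one (a : ℝ) {k s : ℕ} (hk : k < s) (n : ℕ) :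
    iteratedDeriv k (jacobiJneg a s n) (-1) = if k = n then 1 else 0 := by
  obtain ⟨s, rfl⟩ := Nat.exists_eq_succ_of_ne_zero (Nat.ne_zero_of_lt hk)
  rcases lt_or_ge s n with hn | hn
  · rw [jacobiJneg_succ_of_lt a hn, if_neg (by omega)]
    exact iteratedDeriv_cauchyPrimitive_self _ (Nat.lt_succ_iff.1 hk) (continuous_jacobiPhat _ _ _)
  · rw [jacobiJneg_of_lt a (Nat.lt_succ_iff.2 hn), iteratedDeriv_one_add_pow_div_factorial,
      add_neg_cancel]
    rcases lt_trichotomy k n with hkn | rfl | hkn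
    · rw [zero_pow (by omega), mul_zero, zero_div, if_neg hkn.ne]
    · simp [Nat.descFactorial_self, Nat.factorial_ne_zero]
    · simp [Nat.descFactorial_of_lt hkn, hkn.ne']

end JacobiNegative

section Radial

/-- The univariate Sobolev inner product on `[0, 1]` with weight `t ^ (a + s)` and point masses
`lam k` on the `k`-th derivatives at `1`; it is the radial part of `coneSobInner`. -/
def radialSobInner (a : ℝ) (s : ℕ) (lam : ℕ → ℝ) (F G : ℝ → ℝ) : ℝ :=
  (∫ t in (0 : ℝ)..1, iteratedDeriv s F t * iteratedDeriv s G t * t ^ (a + s)) +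
    ∑ k ∈ range s, lam k * (iteratedDeriv k F 1 * iteratedDeriv k G 1)

variable {d m m' s : ℕ} {Y Y' : Euc d → ℝ}

lemma pdT_mul (k : ℕ) (F : ℝ → ℝ) (Y : Euc d → ℝ) (p : Euc d × ℝ) :
    pdT k (fun p => F p.2 * Y p.1) p = iteratedDeriv k F p.2 * Y p.1 := by
  simp only [pdT, iteratedDeriv_mul_const_field]

lemma sphInt_const_mul (c : ℝ) (g : Euc d → ℝ) :
    sphInt d (fun ξ => c * g ξ) = c * sphInt d g :=
  integral_const_mul c _

lemma coneSobInner_mul_mul (hd : d ≠ 0) (β : ℝ) (s : ℕ) (lam : ℕ → ℝ) (F G : ℝ → ℝ)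
    (hY : ∀ (r : ℝ) (x : Euc d), Y (r • x) = r ^ m * Y x)
    (hY' : ∀ (r : ℝ) (x : Euc d), Y' (r • x) = r ^ m' * Y' x) :
    coneSobInner d β s lam (fun p => F p.2 * Y p.1) (fun p => G p.2 * Y' p.1) =
      1 / omegaS d * sphInt d (fun ξ => Y ξ * Y' ξ) *
        radialSobInner (β + d - 1 + m + m') s lam F G := by
  have hcone : coneInt d (fun p => pdT s (fun p => F p.2 * Y p.1) p *
      pdT s (fun p => G p.2 * Y' p.1) p * p.2 ^ (β + s)) = sphInt d (fun ξ => Y ξ * Y' ξ) *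
        ∫ t in (0 : ℝ)..1, iteratedDeriv s F t * iteratedDeriv s G t *
          t ^ (β + d - 1 + m + m' + s) := by
    rw [coneInt, ← intervalIntegral.integral_const_mul]
    refine intervalIntegral.integral_congr_Ioo_of_le zero_le_one fun t ht => ?_
    have hpow : t ^ (β + d - 1 + m + m' + s) = t ^ (β + s) * t ^ (d - 1 + m + m') := by
      rw [← Real.rpow_add_natCast ht.1.ne']
      push_cast [Nat.cast_pred (Nat.pos_of_ne_zero hd)]
      ring_nf
    have hsph (ξ : Euc d) : iteratedDeriv s F t * (t ^ m * Y ξ) *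
        (iteratedDeriv s G t * (t ^ m' * Y' ξ)) * t ^ (β + s) =
          iteratedDeriv s F t * iteratedDeriv s G t * t ^ (β + s) * t ^ m * t ^ m' *
            (Y ξ * Y' ξ) := by ring
    simp only [pdT_mul, hY, hY', hsph, sphInt_const_mul, hpow]
    ring
  have hpoint (k : ℕ) : sphInt d (fun ξ => pdT k (fun p => F p.2 * Y p.1) (ξ, 1) *
      pdT k (fun p => G p.2 * Y' p.1) (ξ, 1)) =
        iteratedDeriv k F 1 * iteratedDeriv k G 1 * sphInt d (fun ξ => Y ξ * Y' ξ) := by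
    simp only [pdT_mul, mul_mul_mul_comm _ (Y _), sphInt_const_mul]
  rw [coneSobInner, hcone, radialSobInner, mul_add, mul_sum]
  simp only [hpoint]
  ring_nf

variable {a : ℝ}

lemma integral_iteratedDeriv_jacobiJneg_mul (ha : -1 < a + s) (hs : s ≠ 0) (N M : ℕ) :
    ∫ t in (0 : ℝ)..1, iteratedDeriv s (fun τ => jacobiJneg a s N (1 - 2 * τ)) t *
        iteratedDeriv s (fun τ => jacobiJneg a s M (1 - 2 * τ)) t * t ^ (a + s) =
      if N = M ∧ s ≤ N then 2 ^ (s - a - 1) * hHat (a + s) 0 (N - s) else 0 := by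
  simp only [iteratedDeriv_comp_const_sub_mul, iteratedDeriv_jacobiJneg a hs, smul_eq_mul]
  rcases lt_or_ge N s with hN | hN
  · simp [hN, hN.not_ge]
  rcases lt_or_ge M s with hM | hM
  · simp [hM, (hM.trans_le hN).ne']
  have hconst : (-2 : ℝ) ^ s * (-2) ^ s * 2 ^ (-(a + s + 1)) = 2 ^ (s - a - 1) := by
    rw [← pow_add, ← two_mul, (even_two_mul s).neg_pow, mul_comm,
      ← Real.rpow_add_natCast two_ne_zero]
    push_cast
    ring_nf
  calc _ = (-2) ^ s * (-2) ^ s * ∫ t in (0 : ℝ)..1, t ^ (a + s) *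
          (jacobiPhat (a + s) 0 (N - s) (1 - 2 * t) *
            jacobiPhat (a + s) 0 (M - s) (1 - 2 * t)) := by
        rw [← intervalIntegral.integral_const_mul]
        simp only [hN.not_gt, hM.not_gt, if_false]
        congr! 2
        ring
    _ = _ := by
        rw [integral_rpow_mul_jacobiPhat_mul_jacobiPhat ha, mul_ite, mul_zero, ← mul_assoc, hconst]
        simp only [tsub_left_inj hN hM, hN, and_true]

lemma sum_iteratedDeriv_jacobiJneg_mul (a : ℝ) (s : ℕ) (lam : ℕ → ℝ) (N M : ℕ) :
    ∑ k ∈ range s, lam k * (iteratedDeriv k (fun τ => jacobiJneg a s N (1 - 2 * τ)) 1 *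
        iteratedDeriv k (fun τ => jacobiJneg a s M (1 - 2 * τ)) 1) =
      if N = M ∧ N < s then 2 ^ (2 * N) * lam N else 0 := by
  have hderiv (k : ℕ) (hk : k < s) (L : ℕ) :
      iteratedDeriv k (fun τ => jacobiJneg a s L (1 - 2 * τ)) 1 =
        (-2) ^ k * if k = L then 1 else 0 := by
    rw [iteratedDeriv_comp_const_sub_mul, mul_one, show (1 - 2 : ℝ) = -1 by norm_num,
      iteratedDeriv_jacobiJneg_neg_one a hk, smul_eq_mul]
  calc _ = ∑ k ∈ range s, if k = N then if N = M then 2 ^ (2 * N) * lam N else 0 else 0 := by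
        refine sum_congr rfl fun k hk => ?_
        rw [hderiv k (mem_range.1 hk), hderiv k (mem_range.1 hk), mul_mul_mul_comm, ← pow_add,
          ← two_mul, (even_two_mul k).neg_pow]
        grind
    _ = _ := by
        rw [sum_ite_eq', ← ite_and]
        simp only [mem_range, and_comm]

lemma radialSobInner_jacobiJneg (ha : -1 < a + s) (hs : s ≠ 0) (lam : ℕ → ℝ) (N M : ℕ) :
    radialSobInner a s lam (fun t => jacobiJneg a s N (1 - 2 * t))
        (fun t => jacobiJneg a s M (1 - 2 * t)) =
      if N = M then
        if N < s then 2 ^ (2 * N) * lam N else 2 ^ (s - a - 1) * hHat (a + s) 0 (N - s)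
      else 0 := by
  rw [radialSobInner, integral_iteratedDeriv_jacobiJneg_mul ha hs,
    sum_iteratedDeriv_jacobiJneg_mul]
  grind

end Radial

theorem coneSS_orthogonal_general {d s m m' n n' : ℕ} (hd : d ≠ 0) (hs : s ≠ 0) {β : ℝ}
    (hβ : -(d : ℝ) - s - 2 * m < β) (lam : ℕ → ℝ) (hm : m ≤ n) (hm' : m' ≤ n')
    {Y Y' : Euc d → ℝ} (hY : IsSolidHarmonic d m Y) (hY' : IsSolidHarmonic d m' Y') :
    coneSobInner d β s lam (coneSS d β s n m Y) (coneSS d β s n' m' Y') =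
      if n = n' then
        1 / omegaS d * sphInt d (fun ξ => Y ξ * Y' ξ) * coneSobH d β s lam n m
      else 0 := by
  have hsep := coneSobInner_mul_mul hd β s lam
    (fun t => jacobiJneg (2 * m + β + d - 1) s (n - m) (1 - 2 * t))
    (fun t => jacobiJneg (2 * m' + β + d - 1) s (n' - m') (1 - 2 * t)) hY.map_smul hY'.map_smul
  refine hsep.trans ?_
  rcases eq_or_ne m m' with rfl | hmm'
  · have ha : β + d - 1 + m + m = 2 * m + β + d - 1 := by ring
    rw [ha, radialSobInner_jacobiJneg (by linarith) hs, coneSobH]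
    simp only [tsub_left_inj hm hm', mul_ite, mul_zero]
    ring_nf
  · rw [hY.sphInt_mul_eq_zero hY' hd hmm']
    simp only [mul_zero, zero_mul, ite_self]

/-- orthogonality and norms of the Sobolev basis `S_{m,Y}^{n,(β,-s)}`. -/
theorem coneSS_orthogonal (d : ℕ) (hd : 2 ≤ d) (s : ℕ) (hs : 1 ≤ s) (β : ℝ)
    (hβ : -(d : ℝ) - s < β) (lam : ℕ → ℝ) (hlam : ∀ k, k ≤ s - 1 → 0 < lam k)
    (m m' n n' : ℕ) (hm : m ≤ n) (hm' : m' ≤ n')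
    (Y Y' : Euc d → ℝ) (hY : IsSolidHarmonic d m Y) (hY' : IsSolidHarmonic d m' Y') :
    ((n ≠ n' ∨ sphInt d (fun ξ => Y ξ * Y' ξ) = 0) →
      coneSobInner d β s lam (coneSS d β s n m Y) (coneSS d β s n' m' Y') = 0) ∧
    ((n = n' ∧ m = m' ∧ Y = Y' ∧ (1 / omegaS d) * sphInt d (fun ξ => Y ξ * Y ξ) = 1) →
      ((n - m ≤ s - 1 →
          coneSobInner d β s lam (coneSS d β s n m Y) (coneSS d β s n m Y)
            = 2 ^ (2 * (n - m)) * lam (n - m)) ∧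
        (s ≤ n - m →
          coneSobInner d β s lam (coneSS d β s n m Y) (coneSS d β s n m Y)
            = 2 ^ ((s : ℝ) - β - 2 * m - d)
                * hHat ((s : ℝ) + 2 * m + β + d - 1) 0 (n - m - s)))) := by
  have hd₀ : d ≠ 0 := by omega
  have hs₀ : s ≠ 0 := by omega
  have hβ₀ : -(d : ℝ) - s - 2 * m < β := by linarith [m.cast_nonneg (α := ℝ)]
  constructor
  · rw [coneSS_orthogonal_general hd₀ hs₀ hβ₀ lam hm hm' hY hY']
    rintro (hn | hYY')
    · exact if_neg hn
    · rw [hYY', mul_zero, zero_mul, ite_self]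
  · rintro ⟨rfl, rfl, rfl, hYY⟩
    rw [coneSS_orthogonal_general hd₀ hs₀ hβ₀ lam hm hm hY hY, if_pos rfl, hYY, one_mul]
    exact ⟨fun h => if_pos (by omega), fun h => if_neg h.not_gt⟩

end
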